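/- Let m₂ = m₃ = m > 0, m₁ > 0, μ₁ > μ₂ > 0, and let z* be a point with positions (q₁, 0, 0, q₄), q₁, q₄ > 0, and all momenta zero. Then the Hessian of the fully reduced Hamiltonian H at z* is block diagonal with respect to the grouping {q₂,q₃}, {q₁,q₄}, {p₂,p₃}, {p₁}, {p₄} (all mixed second derivatives between different groups vanish), with ∂²H/∂p₁² = 1/ν₁, ∂²H/∂p₄² = 1/ν₂, and with the three 2×2 blocks: ∂²H/∂(q₂,q₃)² = [[μ₂²/(ν₂q₁²q₄²) + m²/q₁³ + 4mm₁(q₁²−8q₄²)/(q₁²+4q₄²)^{5/2}, μ₁²/(ν₂q₁q₄³) + μ₂²/(ν₁q₁³q₄) − 48mm₁q₁q₄/(q₁²+4q₄²)^{5/2}], [same off-diagonal entry, μ₁²/(ν₁q₁²q₄²) − 32mm₁(q₁²−2q₄²)/(q₁²+4q₄²)^{5/2}]]; ∂²H/∂(q₁,q₄)² = [[3μ₂²/(ν₁q₁⁴) − 2m²/q₁³ − 8mm₁(q₁²−2q₄²)/(q₁²+4q₄²)^{5/2}, −48mm₁q₁q₄/(q₁²+4q₄²)^{5/2}], [same off-diagonal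 entry, 3μ₁²/(ν₂q₄⁴) + 16mm₁(q₁²−8q₄²)/(q₁²+4q₄²)^{5/2}]]; ∂²H/∂(p₂,p₃)² = (1/(μ₁²−μ₂²))·[[μ₁²(1/ν₁ − q₁²/(ν₂q₄²)), μ₁²q₁/(ν₂q₄) − μ₂²q₄/(ν₁q₁)], [same off-diagonal entry, μ₂²(q₄²/(ν₁q₁²) − 1/ν₂)]]. -/

import Mathlib

noncomputable section

/-- `f(q_i, q_j, L₃) = ((L_d + L_s)²q_i² + (L_d − L_s)²q_j²)/(16A²)`,
with `L_d = √(Δ² − L₃²)`, `L_s = √(Σ² − L₃²)`, `Δ = μ₁ − μ₂`, `Σ = μ₁ + μ₂`. -/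
def fred (μ₁ μ₂ A qi qj L₃ : ℝ) : ℝ :=
  let Ld := Real.sqrt ((μ₁ - μ₂) ^ 2 - L₃ ^ 2)
  let Ls := Real.sqrt ((μ₁ + μ₂) ^ 2 - L₃ ^ 2)
  ((Ld + Ls) ^ 2 * qi ^ 2 + (Ld - Ls) ^ 2 * qj ^ 2) / (16 * A ^ 2)

/-- The fully reduced Hamiltonian of the three-body problem in `ℝ⁴` on the phase space
`ℝ⁴ × ℝ⁴` (positions `q`, momenta `p`). -/
def Hred (ν₁ ν₂ μ₁ μ₂ : ℝ) (V : (Fin 3 → ℝ) → ℝ) (z : (Fin 4 → ℝ) × (Fin 4 → ℝ)) : ℝ :=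
  let q := z.1; let p := z.2
  let A := (q 0 * q 3 - q 1 * q 2) / 2
  let L₃ := q 0 * p 1 - q 1 * p 0 + q 2 * p 3 - q 3 * p 2
  (1 / (2 * ν₁)) * (p 0 ^ 2 + p 1 ^ 2 + fred μ₁ μ₂ A (q 2) (q 3) L₃) +
    (1 / (2 * ν₂)) * (p 2 ^ 2 + p 3 ^ 2 + fred μ₁ μ₂ A (q 0) (q 1) L₃) +
    V ![q 0 ^ 2 + q 1 ^ 2, q 2 ^ 2 + q 3 ^ 2, q 0 * q 2 + q 1 * q 3]

/-- The Newtonian potential of the three-body problem in the translation-reduced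
variables: `V(s₁,s₂,s₃) = −m₂m₃/√s₁ − m₃m₁/√(a₂²s₁+s₂+2a₂s₃) − m₁m₂/√(a₃²s₁+s₂−2a₃s₃)`
with `a₂ = m₂/(m₂+m₃)`, `a₃ = m₃/(m₂+m₃)`. -/
def Vnewt (m₁ m₂ m₃ : ℝ) (s : Fin 3 → ℝ) : ℝ :=
  -(m₂ * m₃ / Real.sqrt (s 0)) -
    m₃ * m₁ / Real.sqrt ((m₂ / (m₂ + m₃)) ^ 2 * s 0 + s 1 + 2 * (m₂ / (m₂ + m₃)) * s 2) -
    m₁ * m₂ / Real.sqrt ((m₃ / (m₂ + m₃)) ^ 2 * s 0 + s 1 - 2 * (m₃ / (m₂ + m₃)) * s 2)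

/-- Phase space of the fully reduced Hamiltonian. -/
abbrev PS := (Fin 4 → ℝ) × (Fin 4 → ℝ)

/-- Basis vector in the `q_i` direction. -/
def eQ (i : Fin 4) : PS := (Pi.single i 1, 0)

/-- Basis vector in the `p_i` direction. -/
def eP (i : Fin 4) : PS := ((0 : Fin 4 → ℝ), Pi.single i 1)

/-- Second directional derivative (Hessian bilinear form). -/
def D2 (H : PS → ℝ) (z u v : PS) : ℝ :=
  fderiv ℝ (fun w => fderiv ℝ H w v) z u

/-- The basis `(q₁,q₂,q₃,q₄,p₁,p₂,p₃,p₄)` of the phase space. -/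
def bvec : Fin 8 → PS := ![eQ 0, eQ 1, eQ 2, eQ 3, eP 0, eP 1, eP 2, eP 3]

/-- Group assignment: `{q₂,q₃} ↦ 0`, `{q₁,q₄} ↦ 1`, `{p₂,p₃} ↦ 2`, `{p₁} ↦ 3`,
`{p₄} ↦ 4`. -/
def grp : Fin 8 → Fin 5 := ![1, 0, 0, 1, 3, 2, 2, 4]

/-!
The Hessian is a symmetric bilinear form, so it is determined by the second derivatives of `H` along
lines `t ↦ z* + t u`, and these are computed by calculus with second order jets in `t`.

Each kinetic term `f` is a sum of two squares,
`f = ((L_d + L_s)/4 · q_i/A)² + ((L_d - L_s)/4 · q_j/A)²`. Since `L₃` vanishes at `z*`, the factors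
`(L_d ± L_s)/4` are stationary there, and to second order only the linear part `q₁p₂ - q₄p₃` of `L₃`
matters; it is the source of the factor `1/(μ₁² - μ₂²)`. For `m₂ = m₃ = m` the potential is
`-m²/|Q₁| - 2mm₁(1/|Q₁ + 2Q₂| + 1/|Q₁ - 2Q₂|)` in the Jacobi vectors `Q₁ = (q₁, q₂)` and
`Q₂ = (q₃, q₄)`, so that only the jet of the inverse length of a planar vector is needed.
-/

open Filter Topology Matrix

section TwoJet

variable {𝕜 : Type*} [NontriviallyNormedField 𝕜]

/-- `f` is differentiable near `x` with `f x = a`, `f' x = b` and `f'' x = c`: the second order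
jet of `f` at `x` is `(a, b, c)`. The derivative near `x` is an existential witness, so that the
calculus rules below never have to rewrite `deriv`. -/
def HasTwoJetAt {F : Type*} [NormedAddCommGroup F] [NormedSpace 𝕜 F] (f : 𝕜 → F) (a b c : F)
    (x : 𝕜) : Prop :=
  f x = a ∧ ∃ f' : 𝕜 → F, (∀ᶠ t in 𝓝 x, HasDerivAt f (f' t) t) ∧ f' x = b ∧ HasDerivAt f' c x

namespace HasTwoJetAt

section Linear

variable {F : Type*} [NormedAddCommGroup F] [NormedSpace 𝕜 F] {f g : 𝕜 → F}
  {a b c a' b' c' : F} {x : 𝕜}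

theorem congr_jet (h : HasTwoJetAt f a b c x) (ha : a = a') (hb : b = b') (hc : c = c') :
    HasTwoJetAt f a' b' c' x :=
  ha ▸ hb ▸ hc ▸ h

theorem const (a : F) (x : 𝕜) : HasTwoJetAt (fun _ => a) a 0 0 x :=
  ⟨rfl, fun _ => 0, .of_forall fun t => hasDerivAt_const t a, rfl, hasDerivAt_const x 0⟩

theorem add_smul_const (a b : F) (x : 𝕜) :
    HasTwoJetAt (fun t => a + t • b) (a + x • b) b 0 x := by
  refine ⟨rfl, fun _ => b, .of_forall fun t => ?_, rfl, hasDerivAt_const x b⟩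
  simpa using ((hasDerivAt_id t).smul_const b).const_add a

theorem add (hf : HasTwoJetAt f a b c x) (hg : HasTwoJetAt g a' b' c' x) :
    HasTwoJetAt (fun t => f t + g t) (a + a') (b + b') (c + c') x := by
  obtain ⟨rfl, f', hf', rfl, hf''⟩ := hf
  obtain ⟨rfl, g', hg', rfl, hg''⟩ := hg
  exact ⟨rfl, f' + g', (hf'.and hg').mono fun t h => h.1.add h.2, rfl, hf''.add hg''⟩

theorem sub (hf : HasTwoJetAt f a b c x) (hg : HasTwoJetAt g a' b' c' x) :
    HasTwoJetAt (fun t => f t - g t) (a - a') (b - b') (c - c') x := by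
  obtain ⟨rfl, f', hf', rfl, hf''⟩ := hf
  obtain ⟨rfl, g', hg', rfl, hg''⟩ := hg
  exact ⟨rfl, f' - g', (hf'.and hg').mono fun t h => h.1.sub h.2, rfl, hf''.sub hg''⟩

end Linear

section Ring

variable {𝔸 : Type*} [NormedRing 𝔸] [NormedAlgebra 𝕜 𝔸] {f g : 𝕜 → 𝔸}
  {a b c a' b' c' : 𝔸} {x : 𝕜}

theorem mul (hf : HasTwoJetAt f a b c x) (hg : HasTwoJetAt g a' b' c' x) :
    HasTwoJetAt (fun t => f t * g t) (a * a') (b * a' + a * b') (c * a' + 2 * (b * b') + a * c')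
      x := by
  obtain ⟨rfl, f', hf', rfl, hf''⟩ := hf
  obtain ⟨rfl, g', hg', rfl, hg''⟩ := hg
  refine ⟨rfl, fun t => f' t * g t + f t * g' t, (hf'.and hg').mono fun t h => h.1.mul h.2, rfl,
    ?_⟩
  refine ((hf''.mul hg'.self_of_nhds).add (hf'.self_of_nhds.mul hg'')).congr_deriv ?_
  noncomm_ring

theorem const_mul (k : 𝔸) (hf : HasTwoJetAt f a b c x) :
    HasTwoJetAt (fun t => k * f t) (k * a) (k * b) (k * c) x := by
  simpa using (const k x).mul hf

end Ring

section Field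

variable {f g : 𝕜 → 𝕜} {a b c a' b' c' x : 𝕜}

theorem sq (hf : HasTwoJetAt f a b c x) :
    HasTwoJetAt (fun t => f t ^ 2) (a ^ 2) (2 * a * b) (2 * (b ^ 2 + a * c)) x := by
  simp only [pow_two (f _)]
  exact (hf.mul hf).congr_jet (by ring) (by ring) (by ring)

theorem comp {F : Type*} [NormedAddCommGroup F] [NormedSpace 𝕜 F] {φ φ' : 𝕜 → F} {φ'' : F}
    (hφ' : ∀ᶠ y in 𝓝 a, HasDerivAt φ (φ' y) y) (hφ'' : HasDerivAt φ' φ'' a)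
    (hf : HasTwoJetAt f a b c x) :
    HasTwoJetAt (fun t => φ (f t)) (φ a) (b • φ' a) (b ^ 2 • φ'' + c • φ' a) x := by
  obtain ⟨rfl, f', hf', rfl, hf''⟩ := hf
  have hfx := hf'.self_of_nhds
  refine ⟨rfl, fun t => f' t • φ' (f t), ?_, rfl, ?_⟩
  · filter_upwards [hf', hfx.continuousAt.eventually hφ'] with t ht hφt
    exact hφt.scomp t ht
  · refine (hf''.smul (hφ''.scomp x hfx)).congr_deriv ?_
    simp only [smul_smul, pow_two, Function.comp_apply, add_comm]

theorem inv (hf : HasTwoJetAt f a b c x) (ha : a ≠ 0) :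
    HasTwoJetAt (fun t => (f t)⁻¹) a⁻¹ (-b / a ^ 2) (2 * b ^ 2 / a ^ 3 - c / a ^ 2) x := by
  have hinv' : ∀ᶠ y in 𝓝 a, HasDerivAt Inv.inv (-(y ^ 2)⁻¹) y :=
    (eventually_ne_nhds ha).mono fun y hy => hasDerivAt_inv hy
  have hinv'' : HasDerivAt (fun y : 𝕜 => -(y ^ 2)⁻¹) (2 / a ^ 3) a := by
    refine ((hasDerivAt_pow 2 a).fun_inv (pow_ne_zero 2 ha)).fun_neg.congr_deriv ?_
    simp only [Nat.cast_ofNat, Nat.add_one_sub_one, pow_one]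
    field_simp
  refine (hf.comp hinv' hinv'').congr_jet rfl ?_ ?_ <;> simp only [smul_eq_mul] <;> field_simp
  ring

theorem div (hf : HasTwoJetAt f a b c x) (hg : HasTwoJetAt g a' b' c' x) (ha' : a' ≠ 0) :
    HasTwoJetAt (fun t => f t / g t) (a / a') (b / a' - a * b' / a' ^ 2)
      (c / a' - 2 * b * b' / a' ^ 2 - a * c' / a' ^ 2 + 2 * a * b' ^ 2 / a' ^ 3) x := by
  simp only [div_eq_mul_inv (f _)]
  exact (hf.mul (hg.inv ha')).congr_jet (by ring) (by ring) (by ring)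

end Field

theorem sqrt {f : ℝ → ℝ} {r b c x : ℝ} (hf : HasTwoJetAt f (r ^ 2) b c x) (hr : 0 < r) :
    HasTwoJetAt (fun t => √(f t)) r (b / (2 * r)) (c / (2 * r) - b ^ 2 / (4 * r ^ 3)) x := by
  have hr2 : r ^ 2 ≠ 0 := by positivity
  have hs : √(r ^ 2) = r := Real.sqrt_sq hr.le
  have hsqrt' : ∀ᶠ y in 𝓝 (r ^ 2), HasDerivAt Real.sqrt (2 * √y)⁻¹ y :=
    (eventually_ne_nhds hr2).mono fun y hy => by simpa using Real.hasDerivAt_sqrt hy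
  have hsqrt'' : HasDerivAt (fun y => (2 * √y)⁻¹) (-1 / (4 * r ^ 3)) (r ^ 2) := by
    refine (((Real.hasDerivAt_sqrt hr2).const_mul 2).fun_inv (by positivity)).congr_deriv ?_
    rw [hs]
    field_simp
    norm_num
  refine (hf.comp hsqrt' hsqrt'').congr_jet hs ?_ ?_ <;> simp only [hs, smul_eq_mul] <;> field_simp
  ring

theorem inv_sqrt_sq_add_sq {f g : ℝ → ℝ} {a b c a' b' c' x : ℝ} (hf : HasTwoJetAt f a b c x)
    (hg : HasTwoJetAt g a' b' c' x) (h : 0 < a ^ 2 + a' ^ 2) :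
    HasTwoJetAt (fun t => (√(f t ^ 2 + g t ^ 2))⁻¹) (√(a ^ 2 + a' ^ 2))⁻¹
      (-(a * b + a' * b') / √(a ^ 2 + a' ^ 2) ^ 3)
      ((3 * (a * b + a' * b') ^ 2 -
        (a ^ 2 + a' ^ 2) * (b ^ 2 + b' ^ 2 + a * c + a' * c')) / √(a ^ 2 + a' ^ 2) ^ 5) x := by
  set r := √(a ^ 2 + a' ^ 2)
  have hr_pos : 0 < r := Real.sqrt_pos.2 h
  have hr_sq : r ^ 2 = a ^ 2 + a' ^ 2 := Real.sq_sqrt h.le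
  have hsum := hf.sq.add hg.sq
  rw [← hr_sq] at hsum
  refine ((hsum.sqrt hr_pos).inv hr_pos.ne').congr_jet rfl ?_ ?_
  · field_simp
  · rw [← hr_sq]
    field_simp
    ring

end HasTwoJetAt

end TwoJet

section Hessian

theorem HasTwoJetAt.fderiv_fderiv_eq {𝕜 E F : Type*} [NontriviallyNormedField 𝕜]
    [NormedAddCommGroup E] [NormedSpace 𝕜 E] [NormedAddCommGroup F] [NormedSpace 𝕜 F]
    {f : E → F} {z u : E} {a b c : F}
    (h : HasTwoJetAt (fun t : 𝕜 => f (z + t • u)) a b c 0) (hf : ContDiffAt 𝕜 2 f z) :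
    fderiv 𝕜 (fderiv 𝕜 f) z u u = c := by
  obtain ⟨-, g, hg, -, hc⟩ := h
  have hline (t : 𝕜) : HasDerivAt (fun t : 𝕜 => z + t • u) u t := by
    simpa using ((hasDerivAt_id t).smul_const u).const_add z
  have htendsto : Tendsto (fun t : 𝕜 => z + t • u) (𝓝 0) (𝓝 z) := by
    simpa using (hline 0).continuousAt.tendsto
  have hdiff : ∀ᶠ w in 𝓝 z, DifferentiableAt 𝕜 f w :=
    (hf.eventually (by simp)).mono fun w hw => hw.differentiableAt (by simp)
  have hg_eq : (fun t => fderiv 𝕜 f (z + t • u) u) =ᶠ[𝓝 0] g := by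
    filter_upwards [hg, htendsto.eventually hdiff] with t hgt hft
    exact (hft.hasFDerivAt.comp_hasDerivAt t (hline t)).unique hgt
  have hfderiv : HasFDerivAt (fderiv 𝕜 f) (fderiv 𝕜 (fderiv 𝕜 f) z) (z + (0 : 𝕜) • u) := by
    rw [zero_smul, add_zero]
    exact ((hf.fderiv_right (m := 1) (by norm_num)).differentiableAt (by simp)).hasFDerivAt
  have hfderiv_line : HasDerivAt (fun t : 𝕜 => fderiv 𝕜 f (z + t • u))
      (fderiv 𝕜 (fderiv 𝕜 f) z u) 0 :=
    hfderiv.comp_hasDerivAt 0 (hline 0)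
  have happly_line := hfderiv_line.clm_apply (hasDerivAt_const (0 : 𝕜) u)
  rw [map_zero, add_zero] at happly_line
  exact happly_line.unique (hc.congr_of_eventuallyEq hg_eq)

theorem bilinForm_apply_eq_of_quadratic_eq {R M ι : Type*} [Field R] [NeZero (2 : R)]
    [AddCommGroup M] [Module R M] [Fintype ι] {B : LinearMap.BilinForm R M}
    (hB : B.IsSymm) {A : Matrix ι ι R} (hA : A.IsSymm) (b : ι → M)
    (h : ∀ x : ι → R, B (∑ i, x i • b i) (∑ i, x i • b i) = x ⬝ᵥ A *ᵥ x) (i j : ι) :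
    B (b i) (b j) = A i j := by
  classical
  let φ := Fintype.linearCombination R b
  have hφ : (B.comp φ φ).IsSymm := ⟨fun x y => hB.eq _ _⟩
  have hBA : B.comp φ φ = toBilin' A := by
    refine LinearMap.BilinForm.ext_of_isSymm hφ (isSymm_toBilin'_iff_isSymm.2 hA) fun x => ?_
    rw [toBilin'_apply', ← h]
    rfl
  simpa [φ] using LinearMap.congr_fun₂ hBA (Pi.single i 1) (Pi.single j 1)

theorem D2_eq_fderiv_fderiv {H : PS → ℝ} {z : PS} (hH : ContDiffAt ℝ 2 H z) (u v : PS) :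
    D2 H z u v = fderiv ℝ (fderiv ℝ H) z u v := by
  have hfderiv : DifferentiableAt ℝ (fderiv ℝ H) z :=
    (hH.fderiv_right (m := 1) (by norm_num)).differentiableAt (by simp)
  simp [D2, fderiv_clm_apply hfderiv (differentiableAt_const v)]

theorem D2_eq_of_hasTwoJetAt {ι : Type*} [Fintype ι] {H : PS → ℝ} {z : PS}
    (hH : ContDiffAt ℝ 2 H z) {A : Matrix ι ι ℝ} (hA : A.IsSymm) (b : ι → PS)
    (h : ∀ x : ι → ℝ, ∃ y y',
      HasTwoJetAt (fun t : ℝ => H (z + t • ∑ i, x i • b i)) y y' (x ⬝ᵥ A *ᵥ x) 0) (i j : ι) :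
    D2 H z (b i) (b j) = A i j := by
  have hsymm : IsSymmSndFDerivAt ℝ H z := hH.isSymmSndFDerivAt (by simp)
  rw [D2_eq_fderiv_fderiv hH]
  refine bilinForm_apply_eq_of_quadratic_eq (B := (fderiv ℝ (fderiv ℝ H) z).toBilinForm)
    ⟨fun u v => hsymm u v⟩ hA b (fun x => ?_) i j
  obtain ⟨_, _, hjet⟩ := h x
  exact hjet.fderiv_fderiv_eq hH

end Hessian

section Kinetic

theorem fred_eq_sq_add_sq (μ₁ μ₂ A qi qj L₃ : ℝ) :
    fred μ₁ μ₂ A qi qj L₃ =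
      ((√((μ₁ - μ₂) ^ 2 - L₃ ^ 2) + √((μ₁ + μ₂) ^ 2 - L₃ ^ 2)) / 4 * (qi / A)) ^ 2 +
        ((√((μ₁ - μ₂) ^ 2 - L₃ ^ 2) - √((μ₁ + μ₂) ^ 2 - L₃ ^ 2)) / 4 * (qj / A)) ^ 2 := by
  rw [fred]
  ring

theorem HasTwoJetAt.sqrt_sq_sub_sq {L : ℝ → ℝ} {k b c x : ℝ} (hL : HasTwoJetAt L 0 b c x)
    (hk : 0 < k) : HasTwoJetAt (fun t => √(k ^ 2 - L t ^ 2)) k 0 (-b ^ 2 / k) x := by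
  have hdiff : HasTwoJetAt (fun t => k ^ 2 - L t ^ 2) (k ^ 2) 0 (-2 * b ^ 2) x :=
    ((HasTwoJetAt.const (k ^ 2) x).sub hL.sq).congr_jet (by ring) (by ring) (by ring)
  refine (hdiff.sqrt hk).congr_jet rfl (by simp) ?_
  field_simp
  ring

theorem HasTwoJetAt.fred {A qi qj L : ℝ → ℝ} {μ₁ μ₂ a b c a' b' c' ℓ ℓ' x : ℝ} (hμ : |μ₂| < μ₁)
    (hi : HasTwoJetAt (fun t => qi t / A t) a b c x)
    (hj : HasTwoJetAt (fun t => qj t / A t) a' b' c' x) (hL : HasTwoJetAt L 0 ℓ ℓ' x) :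
    HasTwoJetAt (fun t => fred μ₁ μ₂ (A t) (qi t) (qj t) (L t))
      ((μ₁ ^ 2 * a ^ 2 + μ₂ ^ 2 * a' ^ 2) / 4)
      ((μ₁ ^ 2 * (a * b) + μ₂ ^ 2 * (a' * b')) / 2)
      ((μ₁ ^ 2 * (b ^ 2 + a * c) + μ₂ ^ 2 * (b' ^ 2 + a' * c') +
        ℓ ^ 2 * (μ₂ ^ 2 * a' ^ 2 - μ₁ ^ 2 * a ^ 2) / (μ₁ ^ 2 - μ₂ ^ 2)) / 2) x := by
  obtain ⟨hsum, hdiff⟩ : 0 < μ₁ + μ₂ ∧ 0 < μ₁ - μ₂ := by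
    constructor <;> linarith [abs_lt.1 hμ]
  have hfac : μ₁ ^ 2 - μ₂ ^ 2 = (μ₁ - μ₂) * (μ₁ + μ₂) := by ring
  have hLd := hL.sqrt_sq_sub_sq hdiff
  have hLs := hL.sqrt_sq_sub_sq hsum
  have hplus : HasTwoJetAt
      (fun t => (√((μ₁ - μ₂) ^ 2 - L t ^ 2) + √((μ₁ + μ₂) ^ 2 - L t ^ 2)) / 4)
      (μ₁ / 2) 0 (-(μ₁ / 2) * ℓ ^ 2 / (μ₁ ^ 2 - μ₂ ^ 2)) x := by
    simp only [div_eq_inv_mul _ (4 : ℝ)]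
    refine ((hLd.add hLs).const_mul 4⁻¹).congr_jet (by ring) (by ring) ?_
    rw [hfac]
    field_simp
    ring
  have hminus : HasTwoJetAt
      (fun t => (√((μ₁ - μ₂) ^ 2 - L t ^ 2) - √((μ₁ + μ₂) ^ 2 - L t ^ 2)) / 4)
      (-μ₂ / 2) 0 (-(μ₂ / 2) * ℓ ^ 2 / (μ₁ ^ 2 - μ₂ ^ 2)) x := by
    simp only [div_eq_inv_mul _ (4 : ℝ)]
    refine ((hLd.sub hLs).const_mul 4⁻¹).congr_jet (by ring) (by ring) ?_
    rw [hfac]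
    field_simp
    ring
  simp only [fred_eq_sq_add_sq]
  exact ((hplus.mul hi).sq.add (hminus.mul hj).sq).congr_jet (by ring) (by ring) (by ring)

/-- The quantity `A = (q₁q₄ - q₂q₃) / 2` in the denominator of `fred`. -/
def area (z : PS) : ℝ := (z.1 0 * z.1 3 - z.1 1 * z.1 2) / 2

/-- The angular momentum `L₃ = q₁p₂ - q₂p₁ + q₃p₄ - q₄p₃`. -/
def angularMomentum (z : PS) : ℝ :=
  z.1 0 * z.2 1 - z.1 1 * z.2 0 + z.1 2 * z.2 3 - z.1 3 * z.2 2

/-- The point of phase space with positions `(q₁, 0, 0, q₄)` and zero momenta. -/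
abbrev isoscelesPoint (q₁ q₄ : ℝ) : PS := (![q₁, 0, 0, q₄], 0)

theorem hasTwoJetAt_fst_line (z u : PS) (k : Fin 4) :
    HasTwoJetAt (fun t : ℝ => (z + t • u).1 k) (z.1 k) (u.1 k) 0 0 := by
  simpa using HasTwoJetAt.add_smul_const (z.1 k) (u.1 k) (0 : ℝ)

theorem hasTwoJetAt_snd_line (z u : PS) (k : Fin 4) :
    HasTwoJetAt (fun t : ℝ => (z + t • u).2 k) (z.2 k) (u.2 k) 0 0 := by
  simpa using HasTwoJetAt.add_smul_const (z.2 k) (u.2 k) (0 : ℝ)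

theorem hasTwoJetAt_area_line (z u : PS) :
    HasTwoJetAt (fun t : ℝ => area (z + t • u)) (area z)
      ((u.1 0 * z.1 3 + z.1 0 * u.1 3 - u.1 1 * z.1 2 - z.1 1 * u.1 2) / 2) (2 * area u) 0 := by
  have hq := hasTwoJetAt_fst_line z u
  simp only [area, div_eq_inv_mul _ (2 : ℝ)]
  exact ((((hq 0).mul (hq 3)).sub ((hq 1).mul (hq 2))).const_mul 2⁻¹).congr_jet
    rfl (by ring) (by ring)

theorem hasTwoJetAt_angularMomentum_line (z u : PS) :
    HasTwoJetAt (fun t : ℝ => angularMomentum (z + t • u)) (angularMomentum z)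
      (u.1 0 * z.2 1 + z.1 0 * u.2 1 - (u.1 1 * z.2 0 + z.1 1 * u.2 0) +
        (u.1 2 * z.2 3 + z.1 2 * u.2 3) - (u.1 3 * z.2 2 + z.1 3 * u.2 2))
      (2 * angularMomentum u) 0 := by
  have hq := hasTwoJetAt_fst_line z u
  have hp := hasTwoJetAt_snd_line z u
  simp only [angularMomentum]
  exact (((((hq 0).mul (hp 1)).sub ((hq 1).mul (hp 0))).add ((hq 2).mul (hp 3))).sub
    ((hq 3).mul (hp 2))).congr_jet rfl (by ring) (by ring)

variable {q₁ q₄ : ℝ}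

theorem area_isoscelesPoint (q₁ q₄ : ℝ) : area (isoscelesPoint q₁ q₄) = q₁ * q₄ / 2 := by
  simp [area]

theorem angularMomentum_isoscelesPoint (q₁ q₄ : ℝ) :
    angularMomentum (isoscelesPoint q₁ q₄) = 0 := by
  simp [angularMomentum]

theorem hasTwoJetAt_angularMomentum_isoscelesPoint_line (q₁ q₄ : ℝ) (u : PS) :
    HasTwoJetAt (fun t : ℝ => angularMomentum (isoscelesPoint q₁ q₄ + t • u)) 0
      (q₁ * u.2 1 - q₄ * u.2 2) (2 * angularMomentum u) 0 :=
  (hasTwoJetAt_angularMomentum_line _ u).congr_jet (angularMomentum_isoscelesPoint q₁ q₄)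
    (by simp) rfl

theorem hasTwoJetAt_fst_div_area_isoscelesPoint_line (hq₁ : q₁ ≠ 0) (hq₄ : q₄ ≠ 0) (u : PS)
    (k : Fin 4) :
    HasTwoJetAt
      (fun t : ℝ => (isoscelesPoint q₁ q₄ + t • u).1 k / area (isoscelesPoint q₁ q₄ + t • u))
      (![2 / q₄, 0, 0, 2 / q₁] k)
      (![-2 * u.1 3 / q₄ ^ 2, 2 * u.1 1 / (q₁ * q₄), 2 * u.1 2 / (q₁ * q₄),
        -2 * u.1 0 / q₁ ^ 2] k)
      (![4 * (u.1 3 ^ 2 / q₄ ^ 3 + u.1 1 * u.1 2 / (q₁ * q₄ ^ 2)),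
        -4 * u.1 1 * (u.1 0 / (q₁ ^ 2 * q₄) + u.1 3 / (q₁ * q₄ ^ 2)),
        -4 * u.1 2 * (u.1 0 / (q₁ ^ 2 * q₄) + u.1 3 / (q₁ * q₄ ^ 2)),
        4 * (u.1 0 ^ 2 / q₁ ^ 3 + u.1 1 * u.1 2 / (q₁ ^ 2 * q₄))] k) 0 := by
  have harea_ne : area (isoscelesPoint q₁ q₄) ≠ 0 := by
    rw [area_isoscelesPoint]
    positivity
  refine ((hasTwoJetAt_fst_line _ u k).div (hasTwoJetAt_area_line _ u) harea_ne).congr_jet ?_ ?_ ?_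
  all_goals
    rw [area_isoscelesPoint]
    fin_cases k <;> simp only [area, Fin.zero_eta, Fin.mk_one, Fin.reduceFinMk, cons_val] <;>
      field_simp <;> ring

theorem hasTwoJetAt_fred_fst_two_three {μ₁ μ₂ : ℝ} (hμ : |μ₂| < μ₁) (hq₁ : q₁ ≠ 0)
    (hq₄ : q₄ ≠ 0) (u : PS) :
    HasTwoJetAt
      (fun t : ℝ =>
        let z := isoscelesPoint q₁ q₄ + t • u
        fred μ₁ μ₂ (area z) (z.1 2) (z.1 3) (angularMomentum z))
      (μ₂ ^ 2 / q₁ ^ 2) (-2 * μ₂ ^ 2 * u.1 0 / q₁ ^ 3)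
      (2 * (μ₁ ^ 2 / (q₁ ^ 2 * q₄ ^ 2) * u.1 2 ^ 2 +
        2 * (μ₂ ^ 2 / (q₁ ^ 3 * q₄)) * u.1 1 * u.1 2 + 3 * μ₂ ^ 2 / q₁ ^ 4 * u.1 0 ^ 2 +
        1 / (μ₁ ^ 2 - μ₂ ^ 2) * (μ₂ ^ 2 / q₁ ^ 2) * (q₁ * u.2 1 - q₄ * u.2 2) ^ 2)) 0 := by
  have hratio := hasTwoJetAt_fst_div_area_isoscelesPoint_line hq₁ hq₄ u
  refine ((hratio 2).fred hμ (hratio 3)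
    (hasTwoJetAt_angularMomentum_isoscelesPoint_line q₁ q₄ u)).congr_jet ?_ ?_ ?_ <;>
    simp only [cons_val] <;> field_simp <;> ring

theorem hasTwoJetAt_fred_fst_zero_one {μ₁ μ₂ : ℝ} (hμ : |μ₂| < μ₁) (hq₁ : q₁ ≠ 0)
    (hq₄ : q₄ ≠ 0) (u : PS) :
    HasTwoJetAt
      (fun t : ℝ =>
        let z := isoscelesPoint q₁ q₄ + t • u
        fred μ₁ μ₂ (area z) (z.1 0) (z.1 1) (angularMomentum z))
      (μ₁ ^ 2 / q₄ ^ 2) (-2 * μ₁ ^ 2 * u.1 3 / q₄ ^ 3)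
      (2 * (μ₂ ^ 2 / (q₁ ^ 2 * q₄ ^ 2) * u.1 1 ^ 2 +
        2 * (μ₁ ^ 2 / (q₁ * q₄ ^ 3)) * u.1 1 * u.1 2 + 3 * μ₁ ^ 2 / q₄ ^ 4 * u.1 3 ^ 2 -
        1 / (μ₁ ^ 2 - μ₂ ^ 2) * (μ₁ ^ 2 / q₄ ^ 2) * (q₁ * u.2 1 - q₄ * u.2 2) ^ 2)) 0 := by
  have hratio := hasTwoJetAt_fst_div_area_isoscelesPoint_line hq₁ hq₄ u
  refine ((hratio 0).fred hμ (hratio 1)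
    (hasTwoJetAt_angularMomentum_isoscelesPoint_line q₁ q₄ u)).congr_jet ?_ ?_ ?_ <;>
    simp only [cons_val] <;> field_simp <;> ring

end Kinetic

section Potential

/-- With Jacobi vectors `Q₁ = (x, y)` and `Q₂ = (z, w)`, the radicands of the last two terms of
`Vnewt` are `|Q₁ ± 2Q₂|² / 4`. -/
theorem Vnewt_self_self {m : ℝ} (hm : m ≠ 0) (m₁ x y z w : ℝ) :
    Vnewt m₁ m m ![x ^ 2 + y ^ 2, z ^ 2 + w ^ 2, x * z + y * w] =
      -m ^ 2 * (√(x ^ 2 + y ^ 2))⁻¹ -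
        2 * m * m₁ * ((√((x + 2 * z) ^ 2 + (y + 2 * w) ^ 2))⁻¹ +
          (√((x - 2 * z) ^ 2 + (y - 2 * w) ^ 2))⁻¹) := by
  have hhalf : m / (m + m) = 1 / 2 := by
    field_simp
    norm_num
  have hsqrt_quarter (s : ℝ) : √(s / 4) = √s / 2 := by
    rw [Real.sqrt_div' s (by norm_num), show (4 : ℝ) = 2 ^ 2 by norm_num,
      Real.sqrt_sq (by norm_num)]
  have hplus : (1 / 2) ^ 2 * (x ^ 2 + y ^ 2) + (z ^ 2 + w ^ 2) + 2 * (1 / 2) * (x * z + y * w) =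
      ((x + 2 * z) ^ 2 + (y + 2 * w) ^ 2) / 4 := by ring
  have hminus : (1 / 2) ^ 2 * (x ^ 2 + y ^ 2) + (z ^ 2 + w ^ 2) - 2 * (1 / 2) * (x * z + y * w) =
      ((x - 2 * z) ^ 2 + (y - 2 * w) ^ 2) / 4 := by ring
  simp only [Vnewt, cons_val, hhalf, hplus, hminus, hsqrt_quarter]
  ring

/-- The squared lengths and the inner product of the Jacobi vectors `(q₁, q₂)` and `(q₃, q₄)`, the
arguments of the potential in `Hred`. -/
def jacobiInvariants (z : PS) : Fin 3 → ℝ :=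
  ![z.1 0 ^ 2 + z.1 1 ^ 2, z.1 2 ^ 2 + z.1 3 ^ 2, z.1 0 * z.1 2 + z.1 1 * z.1 3]

theorem hasTwoJetAt_Vnewt_isoscelesPoint_line {m q₁ : ℝ} (hm : m ≠ 0) (hq₁ : 0 < q₁)
    (m₁ q₄ : ℝ) (u : PS) :
    HasTwoJetAt
      (fun t : ℝ => Vnewt m₁ m m (jacobiInvariants (isoscelesPoint q₁ q₄ + t • u)))
      (-m ^ 2 / q₁ - 4 * m * m₁ / √(q₁ ^ 2 + 4 * q₄ ^ 2))
      (m ^ 2 * u.1 0 / q₁ ^ 2 +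
        4 * m * m₁ * (q₁ * u.1 0 + 4 * q₄ * u.1 3) / √(q₁ ^ 2 + 4 * q₄ ^ 2) ^ 3)
      (m ^ 2 * (u.1 1 ^ 2 - 2 * u.1 0 ^ 2) / q₁ ^ 3 -
        4 * m * m₁ * (3 * (q₁ * u.1 0 + 4 * q₄ * u.1 3) ^ 2 +
          12 * (q₁ * u.1 2 + q₄ * u.1 1) ^ 2 - (q₁ ^ 2 + 4 * q₄ ^ 2) *
            (u.1 0 ^ 2 + u.1 1 ^ 2 + 4 * u.1 2 ^ 2 + 4 * u.1 3 ^ 2)) /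
          √(q₁ ^ 2 + 4 * q₄ ^ 2) ^ 5) 0 := by
  have hq := hasTwoJetAt_fst_line (isoscelesPoint q₁ q₄) u
  have hbase := (hq 0).inv_sqrt_sq_add_sq (hq 1) (by simp only [cons_val]; positivity)
  have hplus := ((hq 0).add ((hq 2).const_mul 2)).inv_sqrt_sq_add_sq
    ((hq 1).add ((hq 3).const_mul 2)) (by simp only [cons_val]; positivity)
  have hminus := ((hq 0).sub ((hq 2).const_mul 2)).inv_sqrt_sq_add_sq
    ((hq 1).sub ((hq 3).const_mul 2)) (by simp only [cons_val, mul_zero, sub_zero]; positivity)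
  have hρ : (2 * q₄) ^ 2 = 4 * q₄ ^ 2 := by ring
  simp only [jacobiInvariants, Vnewt_self_self hm]
  refine ((hbase.const_mul (-m ^ 2)).sub ((hplus.add hminus).const_mul (2 * m * m₁))).congr_jet
    ?_ ?_ ?_
  all_goals
    simp only [cons_val, mul_zero, add_zero, zero_add, sub_zero, zero_sub, neg_sq,
      zero_pow two_ne_zero, hρ, Real.sqrt_sq hq₁.le]
    field_simp
    ring

end Potential

section Smoothness

variable {E : Type*} [NormedAddCommGroup E] [NormedSpace ℝ E] {n : WithTop ℕ∞}

theorem contDiffAt_fred {μ₁ μ₂ : ℝ} {A qi qj L : E → ℝ} {z : E} (hA : ContDiffAt ℝ n A z)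
    (hi : ContDiffAt ℝ n qi z) (hj : ContDiffAt ℝ n qj z) (hL : ContDiffAt ℝ n L z)
    (hAz : A z ≠ 0) (hLd : L z ^ 2 ≠ (μ₁ - μ₂) ^ 2) (hLs : L z ^ 2 ≠ (μ₁ + μ₂) ^ 2) :
    ContDiffAt ℝ n (fun w => fred μ₁ μ₂ (A w) (qi w) (qj w) (L w)) z := by
  have hsqrt {k : ℝ} (hk : L z ^ 2 ≠ k ^ 2) :
      ContDiffAt ℝ n (fun w => √(k ^ 2 - L w ^ 2)) z :=
    (contDiffAt_const.sub (hL.pow 2)).sqrt (sub_ne_zero.2 hk.symm)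
  have hLd' := hsqrt hLd
  have hLs' := hsqrt hLs
  unfold fred
  exact ((((hLd'.add hLs').pow 2).mul (hi.pow 2)).add
    (((hLd'.sub hLs').pow 2).mul (hj.pow 2))).div (contDiffAt_const.mul (hA.pow 2))
    (mul_ne_zero (by norm_num) (pow_ne_zero 2 hAz))

theorem contDiffAt_Vnewt (m₁ m₂ m₃ : ℝ) {s : Fin 3 → ℝ} (h₁ : 0 < s 0)
    (h₂ : 0 < (m₂ / (m₂ + m₃)) ^ 2 * s 0 + s 1 + 2 * (m₂ / (m₂ + m₃)) * s 2)
    (h₃ : 0 < (m₃ / (m₂ + m₃)) ^ 2 * s 0 + s 1 - 2 * (m₃ / (m₂ + m₃)) * s 2) :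
    ContDiffAt ℝ n (Vnewt m₁ m₂ m₃) s := by
  have hdiv_sqrt (k : ℝ) {g : (Fin 3 → ℝ) → ℝ} (hg : ContDiffAt ℝ n g s) (hgs : 0 < g s) :
      ContDiffAt ℝ n (fun s => k / √(g s)) s :=
    contDiffAt_const.div (hg.sqrt hgs.ne') (Real.sqrt_pos.2 hgs).ne'
  exact ((hdiv_sqrt _ (by fun_prop) h₁).neg.sub (hdiv_sqrt _ (by fun_prop) h₂)).sub
    (hdiv_sqrt _ (by fun_prop) h₃)

theorem contDiffAt_Hred_Vnewt_isoscelesPoint {m μ₁ μ₂ q₁ q₄ : ℝ} (m₁ ν₁ ν₂ : ℝ) (hμ : |μ₂| < μ₁)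
    (hq₁ : q₁ ≠ 0) (hq₄ : q₄ ≠ 0) :
    ContDiffAt ℝ n (Hred ν₁ ν₂ μ₁ μ₂ (Vnewt m₁ m m)) (isoscelesPoint q₁ q₄) := by
  have hq (k : Fin 4) : ContDiffAt ℝ n (fun z : PS => z.1 k) (isoscelesPoint q₁ q₄) := by fun_prop
  have hp (k : Fin 4) : ContDiffAt ℝ n (fun z : PS => z.2 k) (isoscelesPoint q₁ q₄) := by fun_prop
  have hfred (i j : Fin 4) : ContDiffAt ℝ n
      (fun z : PS => fred μ₁ μ₂ (area z) (z.1 i) (z.1 j) (angularMomentum z))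
      (isoscelesPoint q₁ q₄) := by
    obtain ⟨hsum, hdiff⟩ := abs_lt.1 hμ
    refine contDiffAt_fred (by unfold area; fun_prop) (hq i) (hq j)
      (by unfold angularMomentum; fun_prop) ?_ ?_ ?_
    · rw [area_isoscelesPoint]
      positivity
    · rw [angularMomentum_isoscelesPoint]
      nlinarith
    · rw [angularMomentum_isoscelesPoint]
      nlinarith
  have hV : ContDiffAt ℝ n (fun z => Vnewt m₁ m m (jacobiInvariants z))
      (isoscelesPoint q₁ q₄) := by
    have hinv : ContDiffAt ℝ n jacobiInvariants (isoscelesPoint q₁ q₄) := by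
      refine contDiffAt_pi.2 fun k => ?_
      fin_cases k <;>
        simp only [jacobiInvariants, Fin.zero_eta, Fin.mk_one, Fin.reduceFinMk, cons_val] <;>
        fun_prop
    refine (contDiffAt_Vnewt m₁ m m ?_ ?_ ?_).comp _ hinv
    all_goals
      simp only [jacobiInvariants, cons_val, mul_zero, zero_mul, add_zero, sub_zero]
      positivity
  exact ((contDiffAt_const.mul ((((hp 0).pow 2).add ((hp 1).pow 2)).add (hfred 2 3))).add
    (contDiffAt_const.mul ((((hp 2).pow 2).add ((hp 3).pow 2)).add (hfred 0 1)))).add hV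

end Smoothness

section Isosceles

/-- The Hessian of `Hred` at `isoscelesPoint q₁ q₄` for the Newtonian potential with
`m₂ = m₃ = m`, with rows and columns ordered as in `bvec`. The entries `a` belong to the positions
and the entries `b` to the momenta. -/
def isoscelesHessian (m m₁ ν₁ ν₂ μ₁ μ₂ q₁ q₄ : ℝ) : Matrix (Fin 8) (Fin 8) ℝ :=
  let R := (q₁ ^ 2 + 4 * q₄ ^ 2) ^ ((5 : ℝ) / 2)
  let a₁₁ := 3 * μ₂ ^ 2 / (ν₁ * q₁ ^ 4) - 2 * m ^ 2 / q₁ ^ 3 -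
    8 * m * m₁ * (q₁ ^ 2 - 2 * q₄ ^ 2) / R
  let a₁₄ := -(48 * m * m₁ * q₁ * q₄) / R
  let a₄₄ := 3 * μ₁ ^ 2 / (ν₂ * q₄ ^ 4) + 16 * m * m₁ * (q₁ ^ 2 - 8 * q₄ ^ 2) / R
  let a₂₂ := μ₂ ^ 2 / (ν₂ * q₁ ^ 2 * q₄ ^ 2) + m ^ 2 / q₁ ^ 3 +
    4 * m * m₁ * (q₁ ^ 2 - 8 * q₄ ^ 2) / R
  let a₂₃ := μ₁ ^ 2 / (ν₂ * q₁ * q₄ ^ 3) + μ₂ ^ 2 / (ν₁ * q₁ ^ 3 * q₄) -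
    48 * m * m₁ * q₁ * q₄ / R
  let a₃₃ := μ₁ ^ 2 / (ν₁ * q₁ ^ 2 * q₄ ^ 2) - 32 * m * m₁ * (q₁ ^ 2 - 2 * q₄ ^ 2) / R
  let b₂₂ := (1 / (μ₁ ^ 2 - μ₂ ^ 2)) * (μ₁ ^ 2 * (1 / ν₁ - q₁ ^ 2 / (ν₂ * q₄ ^ 2)))
  let b₂₃ := (1 / (μ₁ ^ 2 - μ₂ ^ 2)) * (μ₁ ^ 2 * q₁ / (ν₂ * q₄) - μ₂ ^ 2 * q₄ / (ν₁ * q₁))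
  let b₃₃ := (1 / (μ₁ ^ 2 - μ₂ ^ 2)) * (μ₂ ^ 2 * (q₄ ^ 2 / (ν₁ * q₁ ^ 2) - 1 / ν₂))
  !![a₁₁, 0, 0, a₁₄, 0, 0, 0, 0;
     0, a₂₂, a₂₃, 0, 0, 0, 0, 0;
     0, a₂₃, a₃₃, 0, 0, 0, 0, 0;
     a₁₄, 0, 0, a₄₄, 0, 0, 0, 0;
     0, 0, 0, 0, 1 / ν₁, 0, 0, 0;
     0, 0, 0, 0, 0, b₂₂, b₂₃, 0;
     0, 0, 0, 0, 0, b₂₃, b₃₃, 0;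
     0, 0, 0, 0, 0, 0, 0, 1 / ν₂]

variable {m ν₁ ν₂ μ₁ μ₂ q₁ q₄ : ℝ}

theorem isSymm_isoscelesHessian (m m₁ ν₁ ν₂ μ₁ μ₂ q₁ q₄ : ℝ) :
    (isoscelesHessian m m₁ ν₁ ν₂ μ₁ μ₂ q₁ q₄).IsSymm := by
  refine IsSymm.ext fun i j => ?_
  fin_cases i <;> fin_cases j <;> rfl

theorem isoscelesHessian_apply_eq_zero_of_grp_ne (m m₁ ν₁ ν₂ μ₁ μ₂ q₁ q₄ : ℝ) {i j : Fin 8}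
    (hij : grp i ≠ grp j) : isoscelesHessian m m₁ ν₁ ν₂ μ₁ μ₂ q₁ q₄ i j = 0 := by
  fin_cases i <;> fin_cases j <;> first | exact absurd rfl hij | rfl

theorem sum_smul_bvec (x : Fin 8 → ℝ) :
    ∑ i, x i • bvec i = (![x 0, x 1, x 2, x 3], ![x 4, x 5, x 6, x 7]) := by
  ext k <;> fin_cases k <;> simp [Fin.sum_univ_eight, bvec, eQ, eP]

theorem hasTwoJetAt_Hred_Vnewt_isoscelesPoint_line (hm : m ≠ 0) (hν₁ : ν₁ ≠ 0) (hν₂ : ν₂ ≠ 0)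
    (hμ : |μ₂| < μ₁) (hq₁ : 0 < q₁) (hq₄ : q₄ ≠ 0) (m₁ : ℝ) (x : Fin 8 → ℝ) :
    ∃ y y', HasTwoJetAt
      (fun t : ℝ =>
        Hred ν₁ ν₂ μ₁ μ₂ (Vnewt m₁ m m) (isoscelesPoint q₁ q₄ + t • ∑ i, x i • bvec i)) y y'
      (x ⬝ᵥ isoscelesHessian m m₁ ν₁ ν₂ μ₁ μ₂ q₁ q₄ *ᵥ x) 0 := by
  have hR : (q₁ ^ 2 + 4 * q₄ ^ 2) ^ ((5 : ℝ) / 2) = √(q₁ ^ 2 + 4 * q₄ ^ 2) ^ 5 := by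
    rw [Real.rpow_div_two_eq_sqrt _ (by positivity), Real.rpow_ofNat]
  have hμ_sq : μ₁ ^ 2 - μ₂ ^ 2 ≠ 0 :=
    (sub_pos.2 (sq_lt_sq' (abs_lt.1 hμ).1 (abs_lt.1 hμ).2)).ne'
  rw [sum_smul_bvec]
  set u : PS := (![x 0, x 1, x 2, x 3], ![x 4, x 5, x 6, x 7])
  have hp := hasTwoJetAt_snd_line (isoscelesPoint q₁ q₄) u
  have hT₁ := (((hp 0).sq.add (hp 1).sq).add
    (hasTwoJetAt_fred_fst_two_three hμ hq₁.ne' hq₄ u)).const_mul (1 / (2 * ν₁))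
  have hT₂ := (((hp 2).sq.add (hp 3).sq).add
    (hasTwoJetAt_fred_fst_zero_one hμ hq₁.ne' hq₄ u)).const_mul (1 / (2 * ν₂))
  refine ⟨_, _, ((hT₁.add hT₂).add
    (hasTwoJetAt_Vnewt_isoscelesPoint_line hm hq₁ m₁ q₄ u)).congr_jet rfl rfl ?_⟩
  simp only [dotProduct, mulVec, Fin.sum_univ_eight, isoscelesHessian, of_apply, cons_val,
    Pi.zero_apply, hR, u]
  field_simp
  ring

end Isosceles

theorem isosceles_hessian_general {m ν₁ ν₂ μ₁ μ₂ q₁ q₄ : ℝ} (hm : m ≠ 0) (hν₁ : ν₁ ≠ 0)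
    (hν₂ : ν₂ ≠ 0) (hμ : |μ₂| < μ₁) (hq₁ : 0 < q₁) (hq₄ : q₄ ≠ 0) (m₁ : ℝ) (i j : Fin 8) :
    D2 (Hred ν₁ ν₂ μ₁ μ₂ (Vnewt m₁ m m)) (isoscelesPoint q₁ q₄) (bvec i) (bvec j) =
      isoscelesHessian m m₁ ν₁ ν₂ μ₁ μ₂ q₁ q₄ i j :=
  D2_eq_of_hasTwoJetAt (contDiffAt_Hred_Vnewt_isoscelesPoint m₁ ν₁ ν₂ hμ hq₁.ne' hq₄)
    (isSymm_isoscelesHessian m m₁ ν₁ ν₂ μ₁ μ₂ q₁ q₄) bvec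
    (hasTwoJetAt_Hred_Vnewt_isoscelesPoint_line hm hν₁ hν₂ hμ hq₁ hq₄ m₁) i j

/-- For two equal masses `m₂ = m₃ = m`, at a point with positions `(q₁,0,0,q₄)` and
zero momenta the Hessian of the fully reduced Hamiltonian is block diagonal with
respect to the grouping `{q₂,q₃}, {q₁,q₄}, {p₂,p₃}, {p₁}, {p₄}`, with the stated
`1×1` and `2×2` blocks. -/
theorem isosceles_hessian (m m₁ μ₁ μ₂ q₁ q₄ : ℝ) (hm : 0 < m) (hm₁ : 0 < m₁)
    (hμ : μ₁ > μ₂) (hμ₂ : 0 < μ₂) (hq₁ : 0 < q₁) (hq₄ : 0 < q₄) :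
    (let ν₁ := m / 2
     let ν₂ := 2 * m * m₁ / (2 * m + m₁)
     let H := Hred ν₁ ν₂ μ₁ μ₂ (Vnewt m₁ m m)
     let zs : PS := (![q₁, 0, 0, q₄], 0)
     let R := (q₁ ^ 2 + 4 * q₄ ^ 2) ^ ((5 : ℝ) / 2)
     -- block diagonality
     (∀ i j : Fin 8, grp i ≠ grp j → D2 H zs (bvec i) (bvec j) = 0) ∧
     -- the two 1×1 blocks
     D2 H zs (eP 0) (eP 0) = 1 / ν₁ ∧
     D2 H zs (eP 3) (eP 3) = 1 / ν₂ ∧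
     -- the (q₂,q₃) block
     D2 H zs (eQ 1) (eQ 1) =
       μ₂ ^ 2 / (ν₂ * q₁ ^ 2 * q₄ ^ 2) + m ^ 2 / q₁ ^ 3 +
         4 * m * m₁ * (q₁ ^ 2 - 8 * q₄ ^ 2) / R ∧
     D2 H zs (eQ 1) (eQ 2) =
       μ₁ ^ 2 / (ν₂ * q₁ * q₄ ^ 3) + μ₂ ^ 2 / (ν₁ * q₁ ^ 3 * q₄) -
         48 * m * m₁ * q₁ * q₄ / R ∧
     D2 H zs (eQ 2) (eQ 1) =
       μ₁ ^ 2 / (ν₂ * q₁ * q₄ ^ 3) + μ₂ ^ 2 / (ν₁ * q₁ ^ 3 * q₄) -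
         48 * m * m₁ * q₁ * q₄ / R ∧
     D2 H zs (eQ 2) (eQ 2) =
       μ₁ ^ 2 / (ν₁ * q₁ ^ 2 * q₄ ^ 2) - 32 * m * m₁ * (q₁ ^ 2 - 2 * q₄ ^ 2) / R ∧
     -- the (q₁,q₄) block
     D2 H zs (eQ 0) (eQ 0) =
       3 * μ₂ ^ 2 / (ν₁ * q₁ ^ 4) - 2 * m ^ 2 / q₁ ^ 3 -
         8 * m * m₁ * (q₁ ^ 2 - 2 * q₄ ^ 2) / R ∧
     D2 H zs (eQ 0) (eQ 3) = -(48 * m * m₁ * q₁ * q₄) / R ∧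
     D2 H zs (eQ 3) (eQ 0) = -(48 * m * m₁ * q₁ * q₄) / R ∧
     D2 H zs (eQ 3) (eQ 3) =
       3 * μ₁ ^ 2 / (ν₂ * q₄ ^ 4) + 16 * m * m₁ * (q₁ ^ 2 - 8 * q₄ ^ 2) / R ∧
     -- the (p₂,p₃) block
     D2 H zs (eP 1) (eP 1) =
       (1 / (μ₁ ^ 2 - μ₂ ^ 2)) * (μ₁ ^ 2 * (1 / ν₁ - q₁ ^ 2 / (ν₂ * q₄ ^ 2))) ∧
     D2 H zs (eP 1) (eP 2) =
       (1 / (μ₁ ^ 2 - μ₂ ^ 2)) * (μ₁ ^ 2 * q₁ / (ν₂ * q₄) - μ₂ ^ 2 * q₄ / (ν₁ * q₁)) ∧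
     D2 H zs (eP 2) (eP 1) =
       (1 / (μ₁ ^ 2 - μ₂ ^ 2)) * (μ₁ ^ 2 * q₁ / (ν₂ * q₄) - μ₂ ^ 2 * q₄ / (ν₁ * q₁)) ∧
     D2 H zs (eP 2) (eP 2) =
       (1 / (μ₁ ^ 2 - μ₂ ^ 2)) * (μ₂ ^ 2 * (q₄ ^ 2 / (ν₁ * q₁ ^ 2) - 1 / ν₂))) := by
  have hν₁ : m / 2 ≠ 0 := by positivity
  have hν₂ : 2 * m * m₁ / (2 * m + m₁) ≠ 0 := by positivity
  have hμ' : |μ₂| < μ₁ := by rwa [abs_of_pos hμ₂]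
  have h := isosceles_hessian_general hm.ne' hν₁ hν₂ hμ' hq₁ hq₄.ne' m₁
  exact ⟨fun i j hij => (h i j).trans
      (isoscelesHessian_apply_eq_zero_of_grp_ne m m₁ _ _ μ₁ μ₂ q₁ q₄ hij),
    h 4 4, h 7 7, h 1 1, h 1 2, h 2 1, h 2 2, h 0 0, h 0 3, h 3 0, h 3 3, h 5 5, h 5 6, h 6 5,
    h 6 6⟩

end
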